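/- Let E be a centered ellipsoid in ℝⁿ with semiaxes a₁,…,aₙ > 0. For every real number i with 0 < i < n, Ṽ_i(E) = (4π^{n/2} / (n Γ((n−i)/2) Γ(i/2))) · ∫₀^∞ u^{i−1} · ((1 + u²/a₁²)⋯(1 + u²/aₙ²))^{−1/2} du. -/

import Mathlib

open MeasureTheory Real Set

noncomputable def sphereMeasure (n : ℕ) :
    Measure (Metric.sphere (0 : EuclideanSpace ℝ (Fin n)) 1) :=
  (volume : Measure (EuclideanSpace ℝ (Fin n))).toSphere

noncomputable def radial {n : ℕ} (K : Set (EuclideanSpace ℝ (Fin n)))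
    (x : EuclideanSpace ℝ (Fin n)) : ℝ :=
  sSup {t : ℝ | 0 ≤ t ∧ t • x ∈ K}

noncomputable def dualVolume (n : ℕ) (i : ℝ) (K : Set (EuclideanSpace ℝ (Fin n))) : ℝ :=
  (1 / n) * ∫ θ : Metric.sphere (0 : EuclideanSpace ℝ (Fin n)) 1,
    radial K (θ : EuclideanSpace ℝ (Fin n)) ^ i ∂(sphereMeasure n)

def ellipsoidSet {n : ℕ} (a : Fin n → ℝ) : Set (EuclideanSpace ℝ (Fin n)) :=
  {x | ∑ j, (x j) ^ 2 / (a j) ^ 2 ≤ 1}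

/-!
The double integral `∫ x, ∫ u > 0, u^(i-1) exp(-‖x‖² - u² Q(x))`, where `Q(x) = ∑ x_j² / a_j²`, is
computed in both orders. The inner integral over `u` is `Γ(i/2) / 2 * Q(x)^(-i/2) * exp(-‖x‖²)`, and
`Q^(-i/2)` is the `i`-th power of the radial function; as this power is homogeneous of degree `-i`,
its integral against the Gaussian splits in polar coordinates into the dual volume and
`Γ((n-i)/2)`. The inner integral over `x` is a diagonal Gaussian integral, whose determinant is
`∏ (1 + u² / a_j²)`.
-/

section Fubini

variable {α β : Type*} [MeasurableSpace α] [MeasurableSpace β] {μ : Measure α} {ν : Measure β}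

theorem integral_integral_eq_toReal_lintegral_prod [SFinite ν] {f : α → β → ℝ}
    (hf : AEStronglyMeasurable (Function.uncurry f) (μ.prod ν))
    (hf_nonneg : 0 ≤ᵐ[μ.prod ν] Function.uncurry f) (hf_int : ∀ᵐ x ∂μ, Integrable (f x) ν) :
    ∫ x, ∫ y, f x y ∂ν ∂μ =
      (∫⁻ z, ENNReal.ofReal (Function.uncurry f z) ∂μ.prod ν).toReal := by
  have hinner : ∀ᵐ x ∂μ, ∫ y, f x y ∂ν = (∫⁻ y, ENNReal.ofReal (f x y) ∂ν).toReal := by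
    filter_upwards [Measure.ae_ae_of_ae_prod hf_nonneg, hf_int] with x hx_nonneg hx_int
    exact integral_eq_lintegral_of_nonneg_ae hx_nonneg hx_int.aestronglyMeasurable
  have hmeas : AEMeasurable (fun z ↦ ENNReal.ofReal (Function.uncurry f z)) (μ.prod ν) :=
    hf.aemeasurable.ennreal_ofReal
  rw [integral_congr_ae hinner, lintegral_prod _ hmeas]
  refine integral_toReal hmeas.lintegral_prod_right' ?_
  filter_upwards [hf_int] with x hx_int using hx_int.lintegral_lt_top

-- A divergent double integral gives both sides the junk value `0`.
theorem integral_integral_swap_of_nonneg [SFinite μ] [SFinite ν] {f : α → β → ℝ}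
    (hf : AEStronglyMeasurable (Function.uncurry f) (μ.prod ν))
    (hf_nonneg : 0 ≤ᵐ[μ.prod ν] Function.uncurry f)
    (hf_right : ∀ᵐ x ∂μ, Integrable (f x) ν) (hf_left : ∀ᵐ y ∂ν, Integrable (f · y) μ) :
    ∫ x, ∫ y, f x y ∂ν ∂μ = ∫ y, ∫ x, f x y ∂μ ∂ν := by
  have hswap : 0 ≤ᵐ[ν.prod μ] Function.uncurry fun y x ↦ f x y :=
    Measure.measurePreserving_swap.quasiMeasurePreserving.ae hf_nonneg
  rw [integral_integral_eq_toReal_lintegral_prod hf hf_nonneg hf_right,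
    integral_integral_eq_toReal_lintegral_prod (f := fun y x ↦ f x y) hf.prod_swap hswap hf_left,
    ← lintegral_prod_swap]
  rfl

end Fubini

section PolarCoordinates

variable {E F : Type*} [NormedAddCommGroup E] [NormedSpace ℝ E] [FiniteDimensional ℝ E]
  [Nontrivial E] [MeasurableSpace E] [BorelSpace E] [NormedAddCommGroup F] [NormedSpace ℝ F]

theorem integral_volumeIoiPow (k : ℕ) (f : ℝ → F) :
    ∫ r, f r ∂(Measure.volumeIoiPow k) = ∫ r in Ioi (0 : ℝ), r ^ k • f r := by
  rw [← integral_subtype_comap measurableSet_Ioi fun r ↦ r ^ k • f r, Measure.volumeIoiPow,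
    integral_withDensity_eq_integral_toReal_smul (by fun_prop) (by simp)]
  refine integral_congr_ae (.of_forall fun r ↦ ?_)
  simp only [ENNReal.toReal_ofReal (pow_nonneg (mem_Ioi.1 r.2).le k)]

theorem integral_smul_fun_norm_of_homogeneous (μ : Measure E) [μ.IsAddHaarMeasure]
    {g : E → ℝ} {d : ℝ} (hg : ∀ r > 0, ∀ x, g (r • x) = r ^ d * g x) (f : ℝ → F) :
    ∫ x, g x • f ‖x‖ ∂μ = (∫ θ : Metric.sphere (0 : E) 1, g θ ∂μ.toSphere) •
      ∫ r in Ioi (0 : ℝ), r ^ (Module.finrank ℝ E - 1 + d) • f r := by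
  have hpolar : ∀ x : ({0}ᶜ : Set E), g x = g (homeomorphUnitSphereProd E x).1 * ‖(x : E)‖ ^ d :=
    fun x ↦ by
      have hx : 0 < ‖(x : E)‖ := norm_pos_iff.2 x.2
      rw [mul_comm, ← hg _ hx, homeomorphUnitSphereProd_apply_fst_coe, smul_inv_smul₀ hx.ne']
  calc ∫ x, g x • f ‖x‖ ∂μ
    _ = ∫ x : ({0}ᶜ : Set E), g x • f ‖(x : E)‖ ∂μ.comap (↑) := by
      rw [integral_subtype_comap (measurableSet_singleton _).compl fun x ↦ g x • f ‖x‖,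
        restrict_compl_singleton]
    _ = ∫ p, g p.1 • (p.2 : ℝ) ^ d • f p.2
          ∂μ.toSphere.prod (Measure.volumeIoiPow (Module.finrank ℝ E - 1)) := by
      rw [← μ.measurePreserving_homeomorphUnitSphereProd.integral_comp
        (Homeomorph.measurableEmbedding _)]
      simp only [hpolar, homeomorphUnitSphereProd_apply_snd_coe, mul_smul]
    _ = (∫ θ : Metric.sphere (0 : E) 1, g θ ∂μ.toSphere) •
          ∫ r in Ioi (0 : ℝ), r ^ (Module.finrank ℝ E - 1) • r ^ d • f r := by
      rw [← integral_volumeIoiPow]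
      exact integral_prod_smul (fun θ : Metric.sphere (0 : E) 1 ↦ g θ)
        fun r : Ioi (0 : ℝ) ↦ (r : ℝ) ^ d • f r
    _ = _ := by
      congr 1
      refine setIntegral_congr_fun measurableSet_Ioi fun r hr ↦ ?_
      simp only [smul_smul]
      rw [rpow_add hr, ← Nat.cast_pred Module.finrank_pos, rpow_natCast]

end PolarCoordinates

section GaussianIntegrals

theorem integral_rpow_mul_exp_neg_mul_sq {b s : ℝ} (hb : 0 < b) (hs : 0 < s) :
    ∫ u in Ioi (0 : ℝ), u ^ (s - 1) * exp (-b * u ^ 2) = Gamma (s / 2) / 2 * b ^ (-s / 2) := by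
  have h := integral_rpow_mul_exp_neg_mul_rpow two_pos (by linarith : -1 < s - 1) hb
  simp only [sub_add_cancel, rpow_two] at h
  rw [h]
  ring

variable {ι : Type*} [Fintype ι]

theorem exp_neg_sum_mul_sq_eq_prod (c x : ι → ℝ) :
    exp (-∑ j, c j * x j ^ 2) = ∏ j, exp (-c j * x j ^ 2) := by
  simp only [← exp_sum, neg_mul, Finset.sum_neg_distrib]

theorem integrable_exp_neg_sum_mul_sq {c : ι → ℝ} (hc : ∀ j, 0 < c j) :
    Integrable fun x : EuclideanSpace ℝ ι ↦ exp (-∑ j, c j * x j ^ 2) := by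
  rw [← (PiLp.volume_preserving_toLp ι).integrable_comp_emb
    (MeasurableEquiv.toLp 2 _).measurableEmbedding]
  simp only [Function.comp_def, exp_neg_sum_mul_sq_eq_prod]
  exact Integrable.fintype_prod fun j ↦ integrable_exp_neg_mul_sq (hc j)

theorem sqrt_pi_div_eq_mul_rpow {b : ℝ} (hb : 0 ≤ b) :
    √(π / b) = π ^ (1 / 2 : ℝ) * b ^ (-(1 : ℝ) / 2) := by
  rw [sqrt_div pi_pos.le, sqrt_eq_rpow, sqrt_eq_rpow, neg_div, rpow_neg hb, div_eq_mul_inv]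

theorem integral_exp_neg_sum_mul_sq {c : ι → ℝ} (hc : ∀ j, 0 ≤ c j) :
    ∫ x : EuclideanSpace ℝ ι, exp (-∑ j, c j * x j ^ 2) =
      π ^ ((Fintype.card ι : ℝ) / 2) * (∏ j, c j) ^ (-(1 : ℝ) / 2) := by
  rw [← (PiLp.volume_preserving_toLp ι).integral_comp
    (MeasurableEquiv.toLp 2 _).measurableEmbedding]
  simp only [exp_neg_sum_mul_sq_eq_prod]
  calc ∫ x : ι → ℝ, ∏ j, exp (-c j * x j ^ 2)
    _ = ∏ j, √(π / c j) := by
      rw [integral_fintype_prod_volume_eq_prod fun j t ↦ exp (-c j * t ^ 2)]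
      simp only [integral_gaussian]
    _ = (π ^ (1 / 2 : ℝ)) ^ Fintype.card ι * (∏ j, c j) ^ (-(1 : ℝ) / 2) := by
      simp only [sqrt_pi_div_eq_mul_rpow (hc _), Finset.prod_mul_distrib, Finset.prod_const,
        Finset.card_univ, finsetProd_rpow _ _ fun j _ ↦ hc j]
    _ = _ := by
      rw [← rpow_mul_natCast pi_pos.le, one_div_mul_eq_div]

end GaussianIntegrals

section Radial

variable {n : ℕ} (K : Set (EuclideanSpace ℝ (Fin n)))

theorem radial_nonneg (x : EuclideanSpace ℝ (Fin n)) : 0 ≤ radial K x :=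
  sSup_nonneg fun _ ht ↦ ht.1

open scoped Pointwise in
theorem radial_smul {r : ℝ} (hr : 0 < r) (x : EuclideanSpace ℝ (Fin n)) :
    radial K (r • x) = r⁻¹ * radial K x := by
  have hset : {t : ℝ | 0 ≤ t ∧ t • r • x ∈ K} = r⁻¹ • {t : ℝ | 0 ≤ t ∧ t • x ∈ K} := by
    ext t
    simp only [mem_inv_smul_set_iff₀ hr.ne', mem_ofPred_eq, smul_eq_mul, smul_smul, mul_comm r t,
      mul_nonneg_iff_of_pos_right hr]
  rw [radial, hset, sSup_smul_of_nonneg (inv_nonneg.2 hr.le), smul_eq_mul, radial]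

theorem radial_smul_rpow (i : ℝ) {r : ℝ} (hr : 0 < r) (x : EuclideanSpace ℝ (Fin n)) :
    radial K (r • x) ^ i = r ^ (-i) * radial K x ^ i := by
  rw [radial_smul K hr, mul_rpow (inv_nonneg.2 hr.le) (radial_nonneg K x), inv_rpow hr.le,
    rpow_neg hr.le]

theorem integral_radial_rpow_mul_exp_neg_norm_sq [NeZero n] {i : ℝ} (hin : i < n) :
    ∫ x, radial K x ^ i * exp (-‖x‖ ^ 2) = n * Gamma ((n - i) / 2) / 2 * dualVolume n i K := by
  have hpolar := integral_smul_fun_norm_of_homogeneous volume (g := (radial K · ^ i))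
    (fun _ hr ↦ radial_smul_rpow K i hr) fun r ↦ exp (-r ^ 2)
  have hgamma := integral_rpow_mul_exp_neg_mul_sq one_pos (sub_pos.2 hin)
  simp only [neg_mul, one_mul, one_rpow, mul_one] at hgamma
  simp only [smul_eq_mul, finrank_euclideanSpace_fin, ← sub_eq_add_neg, sub_right_comm _ 1 i,
    hgamma] at hpolar
  have hn : (n : ℝ) ≠ 0 := NeZero.ne _
  rw [hpolar, dualVolume, sphereMeasure]
  field_simp

end Radial

section EllipsoidForm

variable {ι : Type*} [Fintype ι] (a : ι → ℝ)

/-- The quadratic form `∑ x_j² / a_j²` of the centered ellipsoid with semiaxes `a_j`, whose unit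
sublevel set is the ellipsoid; coordinates with `a_j = 0` do not contribute. -/
noncomputable def ellipsoidForm (x : EuclideanSpace ℝ ι) : ℝ :=
  ∑ j, x j ^ 2 / a j ^ 2

theorem ellipsoidForm_smul (t : ℝ) (x : EuclideanSpace ℝ ι) :
    ellipsoidForm a (t • x) = t ^ 2 * ellipsoidForm a x := by
  simp only [ellipsoidForm, PiLp.smul_apply, smul_eq_mul, mul_pow, mul_div_assoc, Finset.mul_sum]

variable {a}

theorem ellipsoidForm_pos (ha : ∀ j, a j ≠ 0) {x : EuclideanSpace ℝ ι} (hx : x ≠ 0) :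
    0 < ellipsoidForm a x := by
  obtain ⟨j, hj⟩ : ∃ j, x j ≠ 0 := by
    contrapose! hx
    exact PiLp.ext hx
  have := ha j
  exact Finset.sum_pos' (fun k _ ↦ by positivity) ⟨j, Finset.mem_univ j, by positivity⟩

end EllipsoidForm

section RadialEllipsoid

variable {n : ℕ} {a : Fin n → ℝ} {x : EuclideanSpace ℝ (Fin n)}

theorem radial_ellipsoidSet (hx : 0 < ellipsoidForm a x) :
    radial (ellipsoidSet a) x = (√(ellipsoidForm a x))⁻¹ := by
  have hset : {t : ℝ | 0 ≤ t ∧ t • x ∈ ellipsoidSet a} = Icc 0 (√(ellipsoidForm a x))⁻¹ := by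
    ext t
    refine and_congr_right fun ht ↦ ?_
    calc t • x ∈ ellipsoidSet a
      _ ↔ t ^ 2 * ellipsoidForm a x ≤ 1 := by rw [← ellipsoidForm_smul]; rfl
      _ ↔ (t * √(ellipsoidForm a x)) ^ 2 ≤ 1 := by rw [mul_pow, sq_sqrt hx.le]
      _ ↔ t ≤ (√(ellipsoidForm a x))⁻¹ := by
        rw [sq_le_one_iff₀ (by positivity), ← le_div_iff₀ (sqrt_pos.2 hx), one_div]
  rw [radial, hset, csSup_Icc (by positivity)]

theorem radial_ellipsoidSet_rpow (hx : 0 < ellipsoidForm a x) (i : ℝ) :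
    radial (ellipsoidSet a) x ^ i = ellipsoidForm a x ^ (-i / 2) := by
  rw [radial_ellipsoidSet hx, sqrt_eq_rpow, ← rpow_neg hx.le, ← rpow_mul hx.le]
  ring_nf

end RadialEllipsoid

section MellinGaussian

variable {ι : Type*} [Fintype ι] (a : ι → ℝ) (i : ℝ)

/-- The integrand `u^(i-1) exp(-‖x‖² - u² Q(x))`, with `Q` the ellipsoid form. Integrated over
`u > 0` it is the Mellin transform producing `Q(x)^(-i/2)`; over `x` it is a Gaussian integral. The
exponent is written in the diagonal form that the Gaussian integral uses. -/
noncomputable def mellinGaussian (x : EuclideanSpace ℝ ι) (u : ℝ) : ℝ :=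
  u ^ (i - 1) * exp (-∑ j, (1 + u ^ 2 / a j ^ 2) * x j ^ 2)

theorem mellinGaussian_eq (x : EuclideanSpace ℝ ι) (u : ℝ) :
    mellinGaussian a i x u =
      u ^ (i - 1) * exp (-ellipsoidForm a x * u ^ 2) * exp (-‖x‖ ^ 2) := by
  have hexponent : ∑ j, (1 + u ^ 2 / a j ^ 2) * x j ^ 2 =
      ellipsoidForm a x * u ^ 2 + ‖x‖ ^ 2 := by
    rw [EuclideanSpace.real_norm_sq_eq, ellipsoidForm, Finset.sum_mul, ← Finset.sum_add_distrib]
    exact Finset.sum_congr rfl fun j _ ↦ by ring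
  rw [mellinGaussian, hexponent, neg_add, exp_add, neg_mul, mul_assoc]

theorem measurable_uncurry_mellinGaussian :
    Measurable (Function.uncurry (mellinGaussian a i)) := by
  simp only [Function.uncurry_def, mellinGaussian]
  fun_prop

theorem mellinGaussian_nonneg (x : EuclideanSpace ℝ ι) {u : ℝ} (hu : 0 ≤ u) :
    0 ≤ mellinGaussian a i x u :=
  mul_nonneg (rpow_nonneg hu _) (exp_pos _).le

theorem integrable_mellinGaussian_left (u : ℝ) :
    Integrable (mellinGaussian a i · u) :=
  (integrable_exp_neg_sum_mul_sq fun j ↦ by positivity).const_mul _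

theorem integral_mellinGaussian_left (u : ℝ) :
    ∫ x, mellinGaussian a i x u = π ^ ((Fintype.card ι : ℝ) / 2) *
      (u ^ (i - 1) * (∏ j, (1 + u ^ 2 / a j ^ 2)) ^ (-(1 : ℝ) / 2)) := by
  simp only [mellinGaussian]
  rw [integral_const_mul, integral_exp_neg_sum_mul_sq fun j ↦ by positivity, mul_left_comm]

variable {a i}

theorem integrableOn_mellinGaussian (hi : 0 < i) {x : EuclideanSpace ℝ ι}
    (hx : 0 < ellipsoidForm a x) : IntegrableOn (mellinGaussian a i x) (Ioi 0) := by
  simp only [funext (mellinGaussian_eq a i x)]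
  exact (integrableOn_rpow_mul_exp_neg_mul_sq hx (by linarith)).mul_const _

theorem setIntegral_mellinGaussian (hi : 0 < i) {x : EuclideanSpace ℝ ι}
    (hx : 0 < ellipsoidForm a x) :
    ∫ u in Ioi (0 : ℝ), mellinGaussian a i x u =
      Gamma (i / 2) / 2 * (ellipsoidForm a x ^ (-i / 2) * exp (-‖x‖ ^ 2)) := by
  simp only [mellinGaussian_eq]
  rw [integral_mul_const, integral_rpow_mul_exp_neg_mul_sq hx hi, mul_assoc]

theorem integral_ellipsoidForm_rpow_mul_exp_neg_norm_sq [Nonempty ι] (ha : ∀ j, a j ≠ 0)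
    (hi : 0 < i) :
    Gamma (i / 2) / 2 * ∫ x, ellipsoidForm a x ^ (-i / 2) * exp (-‖x‖ ^ 2) =
      π ^ ((Fintype.card ι : ℝ) / 2) *
        ∫ u in Ioi (0 : ℝ), u ^ (i - 1) * (∏ j, (1 + u ^ 2 / a j ^ 2)) ^ (-(1 : ℝ) / 2) := by
  have hform_pos : ∀ᵐ x, 0 < ellipsoidForm a x :=
    (Measure.ae_ne volume 0).mono fun x hx ↦ ellipsoidForm_pos ha hx
  have hnonneg : 0 ≤ᵐ[volume.prod (volume.restrict (Ioi 0))]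
      Function.uncurry (mellinGaussian a i) := by
    filter_upwards [Measure.quasiMeasurePreserving_snd.ae (ae_restrict_mem measurableSet_Ioi)]
      with z hz using mellinGaussian_nonneg a i z.1 (le_of_lt hz)
  calc Gamma (i / 2) / 2 * ∫ x, ellipsoidForm a x ^ (-i / 2) * exp (-‖x‖ ^ 2)
    _ = ∫ x, ∫ u in Ioi (0 : ℝ), mellinGaussian a i x u := by
      rw [← integral_const_mul]
      exact integral_congr_ae <| hform_pos.mono fun x hx ↦ (setIntegral_mellinGaussian hi hx).symm
    _ = ∫ u in Ioi (0 : ℝ), ∫ x, mellinGaussian a i x u :=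
      integral_integral_swap_of_nonneg
        (measurable_uncurry_mellinGaussian a i).aestronglyMeasurable hnonneg
        (hform_pos.mono fun x hx ↦ integrableOn_mellinGaussian hi hx)
        (.of_forall (integrable_mellinGaussian_left a i))
    _ = _ := by
      simp only [integral_mellinGaussian_left, integral_const_mul]

end MellinGaussian

/-- Moment representation of the dual volume `Ṽ_i` of a centered ellipsoid, for `0 < i < n`. -/
theorem dualVolume_moment_formula_pos
    (n : ℕ) (hn : 0 < n) (a : Fin n → ℝ) (ha : ∀ j, 0 < a j)
    (i : ℝ) (hi0 : 0 < i) (hin : i < n) :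
    dualVolume n i (ellipsoidSet a) =
      4 * Real.pi ^ ((n : ℝ) / 2) /
          (n * Real.Gamma (((n : ℝ) - i) / 2) * Real.Gamma (i / 2)) *
        ∫ u in Ioi (0 : ℝ),
          u ^ (i - 1) * (∏ j, (1 + u ^ 2 / (a j) ^ 2)) ^ (-(1 : ℝ) / 2) := by
  have : NeZero n := ⟨hn.ne'⟩
  have ha_ne : ∀ j, a j ≠ 0 := fun j ↦ (ha j).ne'
  have hradial : ∫ x, radial (ellipsoidSet a) x ^ i * exp (-‖x‖ ^ 2) =
      ∫ x, ellipsoidForm a x ^ (-i / 2) * exp (-‖x‖ ^ 2) := by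
    refine integral_congr_ae ?_
    filter_upwards [Measure.ae_ne volume 0] with x hx
    rw [radial_ellipsoidSet_rpow (ellipsoidForm_pos ha_ne hx)]
  have hdual := integral_radial_rpow_mul_exp_neg_norm_sq (ellipsoidSet a) hin
  have hmoment := integral_ellipsoidForm_rpow_mul_exp_neg_norm_sq ha_ne hi0
  rw [← hradial, hdual, Fintype.card_fin] at hmoment
  have hGamma_sub : 0 < Gamma ((n - i) / 2) := Gamma_pos_of_pos (by linarith)
  field_simp at hmoment ⊢
  linarith
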